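/- arXiv:0712.0123 — 3 statements merged into one kernel-verified Lean document; each statement's English description precedes it below -/
import Mathlib

section
/- Let R be a commutative coherent ring that is n-FC (Ext_R^{n+1}(P, R) = 0 for every finitely presented R-module P) and m-perfect (every flat R-module has projective dimension at most m), for some nonnegative integers n and m. If M is an R-module such that Ext_R^i(M, Q) = 0 for every integer i ≥ 1 and every R-module Q of finite projective dimension, then M is Gorenstein projective: there exists an exact sequence of R-modules 0 → M → P⁰ → P¹ → P² → ⋯ with each Pⁱ projective, which remains exact after applying the functor Hom_R(−, Q) for every projective R-module Q. -/
open CategoryTheory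

noncomputable section

universe u

/-- The `j`-th Ext group of the `R`-modules `M` and `N`. -/
def extGroup (R : Type u) [CommRing R] (M N : ModuleCat.{u} R) (j : ℕ) : ModuleCat R :=
  ((Ext R (ModuleCat.{u} R) j).obj (Opposite.op M)).obj N

/-- `Ext_R^j(M, N) = 0`. -/
def ExtVanish (R : Type u) [CommRing R] (M N : ModuleCat.{u} R) (j : ℕ) : Prop :=
  Subsingleton (extGroup R M N j)

/-- The projective dimension of `M` is at most `n`
(via the standard Ext-vanishing characterization). -/
def ProjDimLE (R : Type u) [CommRing R] (M : ModuleCat.{u} R) (n : ℕ) : Prop :=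
  ∀ (N : ModuleCat.{u} R) (j : ℕ), n < j → ExtVanish R M N j

/-- `M` has finite projective dimension. -/
def HasFinProjDim (R : Type u) [CommRing R] (M : ModuleCat.{u} R) : Prop :=
  ∃ n, ProjDimLE R M n

/-- `R` is a coherent ring: every finitely generated ideal is finitely presented. -/
def IsCoherentRing (R : Type u) [CommRing R] : Prop :=
  ∀ I : Ideal R, I.FG → Module.FinitePresentation R I

open Abelian

section Helpers

variable {R : Type u} [CommRing R]

/-- vanishing in terms of the derived category Ext -/
def EV (X Y : ModuleCat.{u} R) (i : ℕ) : Prop := Subsingleton (Abelian.Ext.{u} X Y i)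

theorem extVanish_iff (X Y : ModuleCat.{u} R) (j : ℕ) :
    ExtVanish R X Y (j + 1) ↔ EV X Y (j + 1) := by
  let P := ProjectiveResolution.of X
  have h1 : ExtVanish R X Y (j + 1) ↔ ∀ f : P.complex.X (j+1) ⟶ Y,
      P.complex.d (j+2) (j+1) ≫ f = 0 → ∃ g : P.complex.X j ⟶ Y, P.complex.d (j+1) j ≫ g = f := by
    unfold ExtVanish extGroup
    have e := P.isoExt (R := R) (j+1) Y
    rw [← ModuleCat.isZero_iff_subsingleton, e.isZero_iff,
      ← HomologicalComplex.exactAt_iff_isZero_homology,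
      HomologicalComplex.exactAt_iff' _ j (j+1) (j+2) (by simp) (by simp),
      ShortComplex.moduleCat_exact_iff]
    rfl
  rw [h1]
  unfold EV
  constructor
  · intro h
    refine subsingleton_of_forall_eq 0 fun a => ?_
    obtain ⟨f, hf, rfl⟩ := P.extMk_surjective a (j+2) rfl
    rw [P.extMk_eq_zero_iff f _ rfl hf j rfl]
    exact h f hf
  · intro h f hf
    rw [← P.extMk_eq_zero_iff f _ rfl hf j rfl]
    exact Subsingleton.elim _ _

theorem projDimLE_iff (X : ModuleCat.{u} R) (n : ℕ) :
    ProjDimLE R X n ↔ HasProjectiveDimensionLT X (n+1) := by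
  rw [hasProjectiveDimensionLT_iff.{u}]
  constructor
  · intro h i hi Y e
    obtain ⟨j, rfl⟩ : ∃ j, i = j + 1 := ⟨i - 1, by omega⟩
    have := (extVanish_iff X Y j).1 (h Y _ (by omega))
    unfold EV at this
    exact Subsingleton.elim _ _
  · intro h N j hj
    obtain ⟨j, rfl⟩ : ∃ k, j = k + 1 := ⟨j - 1, by omega⟩
    rw [extVanish_iff]
    exact subsingleton_of_forall_eq 0 fun e => h _ (by omega) e

variable {S : ShortComplex (ModuleCat.{u} R)}

theorem ev_contra_up (hS : S.ShortExact) [Projective S.X₂] (Y : ModuleCat.{u} R) (i : ℕ)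
    (h : EV S.X₁ Y i) : EV S.X₃ Y (i + 1) := by
  refine subsingleton_of_forall_eq 0 fun e => ?_
  obtain ⟨a, rfl⟩ := Ext.contravariant_sequence_exact₃ hS Y e (Ext.eq_zero_of_projective _)
    (add_comm 1 i)
  unfold EV at h
  rw [Subsingleton.elim a 0, Ext.comp_zero]

theorem ev_contra_down (hS : S.ShortExact) [Projective S.X₂] (Y : ModuleCat.{u} R) (i : ℕ)
    (h : EV S.X₃ Y (i + 2)) : EV S.X₁ Y (i + 1) := by
  refine subsingleton_of_forall_eq 0 fun e => ?_
  unfold EV at h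
  obtain ⟨a, rfl⟩ := Ext.contravariant_sequence_exact₁ hS Y e (add_comm 1 (i+1))
    (Subsingleton.elim _ _)
  rw [Ext.eq_zero_of_projective a, Ext.comp_zero]

theorem ev_cov_down (hS : S.ShortExact) [Injective S.X₂] (Y : ModuleCat.{u} R) (i : ℕ)
    (h : EV Y S.X₁ (i + 2)) : EV Y S.X₃ (i + 1) := by
  refine subsingleton_of_forall_eq 0 fun e => ?_
  unfold EV at h
  obtain ⟨a, rfl⟩ := Ext.covariant_sequence_exact₃ Y hS e rfl
    (Subsingleton.elim _ _)
  rw [Ext.eq_zero_of_injective a, Ext.zero_comp]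

theorem ext_one_of_extend (hS : S.ShortExact) [Projective S.X₂] (Y : ModuleCat.{u} R)
    (h : ∀ f : S.X₁ ⟶ Y, ∃ g : S.X₂ ⟶ Y, S.f ≫ g = f) : EV S.X₃ Y 1 := by
  refine subsingleton_of_forall_eq 0 fun e => ?_
  obtain ⟨a, rfl⟩ := Ext.contravariant_sequence_exact₃ hS Y e (Ext.eq_zero_of_projective _)
    (add_comm 1 0)
  obtain ⟨f, rfl⟩ := Ext.addEquiv₀.symm.surjective a
  obtain ⟨g, rfl⟩ := h f
  simp [← Ext.mk₀_comp_mk₀]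

theorem extend_of_ext_one (hS : S.ShortExact) (Y : ModuleCat.{u} R)
    (h : EV S.X₃ Y 1) (f : S.X₁ ⟶ Y) : ∃ g : S.X₂ ⟶ Y, S.f ≫ g = f := by
  unfold EV at h
  obtain ⟨a, ha⟩ := Ext.contravariant_sequence_exact₁ hS Y (Ext.mk₀ f) (add_comm 1 0)
    (Subsingleton.elim _ _)
  obtain ⟨g, rfl⟩ := Ext.addEquiv₀.symm.surjective a
  refine ⟨g, Ext.addEquiv₀.symm.injective ?_⟩
  simpa using ha

theorem lift_of_ext_one (hS : S.ShortExact) (Y : ModuleCat.{u} R)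
    (h : EV Y S.X₁ 1) (f : Y ⟶ S.X₃) : ∃ g : Y ⟶ S.X₂, g ≫ S.g = f := by
  unfold EV at h
  obtain ⟨a, ha⟩ := Ext.covariant_sequence_exact₃ Y hS (Ext.mk₀ f) rfl
    (Subsingleton.elim _ _)
  obtain ⟨g, rfl⟩ := Ext.addEquiv₀.symm.surjective a
  refine ⟨g, Ext.addEquiv₀.symm.injective ?_⟩
  simpa using ha


open TensorProduct in
/-- contraction of a tensor with functionals -/
def evT {E N : Type u} [AddCommGroup E] [Module R E] [AddCommGroup N] [Module R N]
    (w : N ⊗[R] E) : (N →ₗ[R] R) →ₗ[R] E :=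
  (TensorProduct.lid R E).toLinearMap ∘ₗ (LinearMap.applyₗ w) ∘ₗ (LinearMap.rTensorHom E)

open TensorProduct in
theorem evT_apply {E N : Type u} [AddCommGroup E] [Module R E] [AddCommGroup N] [Module R N]
    (w : N ⊗[R] E) (l : N →ₗ[R] R) : evT w l = TensorProduct.lid R E (l.rTensor E w) := rfl

open TensorProduct in
theorem evT_recon {E : Type u} [AddCommGroup E] [Module R E] {a : ℕ}
    (w : (Fin a → R) ⊗[R] E) :
    w = ∑ j, Pi.single j (1 : R) ⊗ₜ evT w (LinearMap.proj j) := by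
  induction w with
  | zero => simp [evT_apply]
  | tmul x y =>
    simp only [evT_apply, LinearMap.rTensor_tmul, TensorProduct.lid_tmul, LinearMap.proj_apply,
      TensorProduct.tmul_smul]
    simp only [TensorProduct.smul_tmul']
    rw [← TensorProduct.sum_tmul]
    congr 1
    ext j
    simp [Pi.single_apply]
  | add x y hx hy =>
    conv_lhs => rw [hx, hy]
    rw [← Finset.sum_add_distrib]
    simp only [evT_apply, map_add, TensorProduct.tmul_add]

open TensorProduct in
/-- key duality step -/
theorem core_inj (E : Type u) [AddCommGroup E] [Module R E] [Module.Injective R E]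
    (Q F : Type u) [AddCommGroup Q] [Module R Q] [AddCommGroup F] [Module R F]
    [Module.FinitePresentation R Q] (i : Q →ₗ[R] F)
    (h : ∀ f : Q →ₗ[R] R, ∃ g : F →ₗ[R] R, g ∘ₗ i = f) :
    Function.Injective (i.rTensor E) := by
  obtain ⟨a, b, f, g, hf, hfg⟩ := Module.FinitePresentation.exists_fin' R Q
  rw [injective_iff_map_eq_zero]
  intro z hz
  obtain ⟨w, rfl⟩ := LinearMap.rTensor_surjective E hf z
  let B : ((Fin a → R) →ₗ[R] R) →ₗ[R] ((Fin b → R) →ₗ[R] R) := LinearMap.lcomp R R g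
  have hle : LinearMap.ker B ≤ LinearMap.ker (evT w) := by
    intro l hl
    have hl' : l ∘ₗ g = 0 := hl
    have hker : LinearMap.ker f ≤ LinearMap.ker l := by
      intro x hx
      obtain ⟨y, rfl⟩ := (hfg x).1 hx
      exact LinearMap.congr_fun hl' y
    obtain ⟨t, ht⟩ : ∃ t : Q →ₗ[R] R, t ∘ₗ f = l := by
      refine ⟨(LinearMap.ker f).liftQ l hker ∘ₗ (f.quotKerEquivOfSurjective hf).symm.toLinearMap, ?_⟩
      ext x
      simp only [LinearMap.comp_apply, LinearEquiv.coe_coe]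
      have : (f.quotKerEquivOfSurjective hf).symm (f (LinearMap.single R (fun _ => R) x 1)) =
        (LinearMap.ker f).mkQ (LinearMap.single R (fun _ => R) x 1) := by
        rw [LinearEquiv.symm_apply_eq]; rfl
      rw [this]; rfl
    obtain ⟨s, hs⟩ := h t
    rw [LinearMap.mem_ker, ← ht, ← hs]
    simp only [evT_apply]
    rw [LinearMap.rTensor_comp, LinearMap.rTensor_comp]
    simp [hz]
  obtain ⟨v, hv⟩ := Module.Injective.out (R := R) (Q := E) ((LinearMap.ker B).liftQ B le_rfl)
    (by rw [← LinearMap.ker_eq_bot]; exact Submodule.ker_liftQ_eq_bot _ _ _ le_rfl)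
    ((LinearMap.ker B).liftQ (evT w) hle)
  have hv' : ∀ l, v (l ∘ₗ g) = evT w l := fun l => hv (Submodule.Quotient.mk l)
  let w' : (Fin b → R) ⊗[R] E := ∑ j, Pi.single j (1 : R) ⊗ₜ v (LinearMap.proj j)
  have hw' : ∀ l, evT w' l = v l := by
    intro l
    simp only [w', evT_apply, map_sum, LinearMap.rTensor_tmul, TensorProduct.lid_tmul, ← map_smul]
    rw [← map_sum]
    congr 1
    ext j
    simp [LinearMap.proj_apply, Pi.single_apply]
  have hgw : g.rTensor E w' = w := by
    rw [evT_recon w, evT_recon (g.rTensor E w')]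
    refine Finset.sum_congr rfl fun j _ => ?_
    congr 1
    rw [← hv', ← hw']
    simp only [evT_apply]
    rw [LinearMap.rTensor_comp]; rfl
  rw [← hgw, ← LinearMap.comp_apply, ← LinearMap.rTensor_comp]
  rw [hfg.linearMap_comp_eq_zero]
  simp

/-- syzygies of f.p. modules -/
theorem fp_of_fg (hcoh : IsCoherentRing R) : ∀ (k : ℕ) (N : Submodule R (Fin k → R)), N.FG →
    Module.FinitePresentation R N := by
  intro k
  induction k with
  | zero =>
    intro N hN
    have : Subsingleton N := inferInstance
    infer_instance
  | succ k ih =>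
    intro N hN
    let p : N →ₗ[R] R := (LinearMap.proj 0) ∘ₗ N.subtype
    have : Module.Finite R N := Module.Finite.of_fg hN
    have h1 : Module.FinitePresentation R (LinearMap.range p) := by
      refine hcoh (LinearMap.range p) ?_
      exact Module.Finite.iff_fg.1 (inferInstance : Module.Finite R (LinearMap.range p))
    have h2 : (LinearMap.ker p.rangeRestrict).FG :=
      Module.FinitePresentation.fg_ker _ p.surjective_rangeRestrict
    let q : LinearMap.ker p.rangeRestrict →ₗ[R] (Fin k → R) :=
      (LinearMap.funLeft R R Fin.succ) ∘ₗ N.subtype ∘ₗ (Submodule.subtype _)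
    have hq : Function.Injective q := by
      rw [injective_iff_map_eq_zero]
      rintro ⟨⟨x, hx⟩, hx'⟩ h0
      have hx0 : x 0 = 0 := by
        simpa [p, Subtype.ext_iff] using hx'
      have : x = 0 := by
        funext j
        refine Fin.cases hx0 (fun j => ?_) j
        exact congrFun h0 j
      subst this
      rfl
    have : Module.Finite R (LinearMap.ker p.rangeRestrict) := Module.Finite.of_fg h2
    have : Module.FinitePresentation R (LinearMap.range q) :=
      ih _ (Module.Finite.iff_fg.1 (inferInstance : Module.Finite R (LinearMap.range q)))
    have : Module.FinitePresentation R (LinearMap.ker p.rangeRestrict) :=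
      Module.FinitePresentation.of_equiv (R := R) (M := LinearMap.range q)
        (N := LinearMap.ker p.rangeRestrict) (LinearEquiv.ofInjective q hq).symm
    exact Module.finitePresentation_of_ker p.rangeRestrict p.surjective_rangeRestrict

theorem ev_char (hcoh : IsCoherentRing R) (E : Type u) [AddCommGroup E] [Module R E]
    [Module.Injective R E] (k : ℕ) : ∀ (P : ModuleCat.{u} R), Module.FinitePresentation R P →
      EV P (ModuleCat.of R R) (k + 1) → EV P (ModuleCat.of R (CharacterModule E)) (k + 1) := by
  induction k with
  | zero =>
    intro P hP h
    obtain ⟨a, p, hp⟩ := Module.Finite.exists_fin' R P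
    have hS := LinearMap.shortExact_shortComplexKer hp
    have hk : Module.FinitePresentation R (LinearMap.ker p) :=
      fp_of_fg hcoh _ _ (Module.FinitePresentation.fg_ker p hp)
    have : Projective p.shortComplexKer.X₂ :=
      (IsProjective.iff_projective (R := R) (Fin a → R)).1 inferInstance
    refine ext_one_of_extend hS _ fun f => ?_
    have hinj := core_inj E (LinearMap.ker p) (Fin a → R) (LinearMap.ker p).subtype (fun f => by
      obtain ⟨g, hg⟩ := extend_of_ext_one hS _ h (ModuleCat.ofHom f)
      exact ⟨g.hom, congrArg ModuleCat.Hom.hom hg⟩)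
    rw [rTensor_injective_iff_lcomp_surjective] at hinj
    obtain ⟨g, hg⟩ := hinj f.hom
    exact ⟨ModuleCat.ofHom g, ModuleCat.hom_ext hg⟩
  | succ k ih =>
    intro P hP h
    obtain ⟨a, p, hp⟩ := Module.Finite.exists_fin' R P
    have hS := LinearMap.shortExact_shortComplexKer hp
    have hk : Module.FinitePresentation R (LinearMap.ker p) :=
      fp_of_fg hcoh _ _ (Module.FinitePresentation.fg_ker p hp)
    have : Projective p.shortComplexKer.X₂ :=
      (IsProjective.iff_projective (R := R) (Fin a → R)).1 inferInstance
    exact ev_contra_up hS _ _ (ih _ hk (ev_contra_down hS _ _ h))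

theorem dual_ses (S : ShortComplex (ModuleCat.{u} R)) (hS : S.ShortExact) :
    ∃ T : ShortComplex (ModuleCat.{u} R), T.ShortExact ∧
      T.X₁ = ModuleCat.of R (CharacterModule S.X₃) ∧ T.X₂ = ModuleCat.of R (CharacterModule S.X₂) ∧
      T.X₃ = ModuleCat.of R (CharacterModule S.X₁) := by
  refine ⟨ShortComplex.mk (ModuleCat.ofHom (CharacterModule.dual S.g.hom))
    (ModuleCat.ofHom (CharacterModule.dual S.f.hom)) ?_, ?_, rfl, rfl, rfl⟩
  · rw [← ModuleCat.ofHom_comp, ← CharacterModule.dual_comp, ← ModuleCat.hom_comp, S.zero]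
    ext : 1
    exact CharacterModule.dual_zero
  · have h1 : Function.Injective S.f.hom := hS.moduleCat_injective_f
    have h2 : Function.Surjective S.g.hom := hS.moduleCat_surjective_g
    refine @ShortComplex.ShortExact.mk _ _ _ _ ?_ ?_ ?_
    · rw [ShortComplex.moduleCat_exact_iff]
      intro (c : CharacterModule S.X₂) hc
      have hc' : ∀ x, c (S.f.hom x) = 0 := fun x => DFunLike.congr_fun (F := CharacterModule S.X₁) hc x
      have hex := hS.exact
      rw [ShortComplex.moduleCat_exact_iff] at hex
      choose s hs using h2
      have key : ∀ y z, S.g.hom y = S.g.hom z → c y = c z := by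
        intro y z hyz
        obtain ⟨x, hx⟩ := hex (y - z) (by change S.g.hom (y - z) = 0; rw [map_sub, hyz, sub_self])
        have : c (y - z) = 0 := by rw [← hx]; exact hc' x
        rwa [map_sub, sub_eq_zero] at this
      refine ⟨(AddMonoidHom.mk' (fun x => c (s x)) (fun x y => ?_) :
        S.X₃ →+ AddCircle (1 : ℚ)), ?_⟩
      · rw [← map_add]
        exact key _ _ (by rw [map_add, hs, hs, hs])
      · refine CharacterModule.ext (A := S.X₂) fun x => ?_
        exact key _ _ (hs _)
    · rw [ModuleCat.mono_iff_injective]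
      exact CharacterModule.dual_injective_of_surjective _ h2
    · rw [ModuleCat.epi_iff_surjective]
      exact CharacterModule.dual_surjective_of_injective _ h1

theorem flat_of_ev (X : ModuleCat.{u} R)
    (h : ∀ (P : ModuleCat.{u} R), Module.FinitePresentation R P →
      EV P (ModuleCat.of R (CharacterModule X)) 1) : Module.Flat R X := by
  rw [Module.Flat.iff_rTensor_injective]
  intro I hI
  rw [rTensor_injective_iff_lcomp_surjective]
  have hs := Submodule.mkQ_surjective I
  have hS := LinearMap.shortExact_shortComplexKer hs
  have h1 := h (ModuleCat.of R (R ⧸ I)) (Module.finitePresentation_of_surjective (Submodule.mkQ I) hs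
    (by rw [Submodule.ker_mkQ]; exact hI))
  intro f
  have hk : LinearMap.ker I.mkQ = I := I.ker_mkQ
  obtain ⟨g, hg⟩ := extend_of_ext_one hS _ h1
    (ModuleCat.ofHom (f ∘ₗ (LinearEquiv.ofEq _ _ hk).toLinearMap))
  refine ⟨g.hom, LinearMap.ext fun x => ?_⟩
  have := congrArg ModuleCat.Hom.hom hg
  exact LinearMap.congr_fun this ⟨x.1, by simp⟩

theorem pd_of_ev (m : ℕ)
    (hperf : ∀ (F : ModuleCat.{u} R), Module.Flat R F → ProjDimLE R F m) (k : ℕ) :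
    ∀ X : ModuleCat.{u} R, (∀ (P : ModuleCat.{u} R), Module.FinitePresentation R P →
      EV P (ModuleCat.of R (CharacterModule X)) (k + 1)) → HasProjectiveDimensionLT X (m+1+k) := by
  induction k with
  | zero =>
    intro X h
    exact (projDimLE_iff _ _).1 (hperf X (flat_of_ev X h))
  | succ k ih =>
    intro X h
    have hS := X.shortExact_projectiveShortComplex
    have hfr : Module.Free R X.projectiveShortComplex.X₂ := inferInstance
    have hpr : Projective X.projectiveShortComplex.X₂ :=
      (IsProjective.iff_projective (R := R) _).1 (inferInstanceAs (Module.Projective R X.projectiveShortComplex.X₂))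
    obtain ⟨T, hT, h1, h2, h3⟩ := dual_ses _ hS
    have hinj : Injective T.X₂ := by
      rw [h2]
      have := Module.Flat.iff_characterModule_injective.1
        (inferInstance : Module.Flat R X.projectiveShortComplex.X₂)
      exact Module.injective_object_of_injective_module R _
    have hK := ih X.projectiveShortComplex.X₁ (fun P hP => by
      rw [← h3]
      refine ev_cov_down hT P k ?_
      rw [h1]
      exact h P hP)
    exact hS.hasProjectiveDimensionLT_X₃ _ hK (hasProjectiveDimensionLT_of_ge _ 1 _ (by omega))

theorem flat_prod (hcoh : IsCoherentRing R) (ι J : Type u) : Module.Flat R (ι → (J →₀ R)) := by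
  refine Module.Flat.of_forall_isTrivialRelation ?_
  intro l f x hx
  let φ : (Fin l → R) →ₗ[R] R := ∑ i, f i • LinearMap.proj i
  have hφ : ∀ v, φ v = ∑ i, f i * v i := fun v => by simp [φ]
  have h1 : Module.FinitePresentation R (LinearMap.range φ) :=
    hcoh (LinearMap.range φ) (Module.Finite.iff_fg.1 (inferInstance : Module.Finite R (LinearMap.range φ)))
  have h2 : (LinearMap.ker φ).FG := by
    have := Module.FinitePresentation.fg_ker _ φ.surjective_rangeRestrict
    rwa [LinearMap.ker_rangeRestrict] at this
  obtain ⟨k, g, hg⟩ := (Submodule.fg_iff_exists_fin_linearMap R _).1 h2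
  have hsec : ∀ v : Fin l → R, ∃ w : Fin k → R, (φ v = 0 → g w = v) ∧ (v = 0 → w = 0) := by
    intro v
    by_cases hv : v = 0
    · exact ⟨0, fun _ => by rw [map_zero, hv], fun _ => rfl⟩
    · by_cases hv' : φ v = 0
      · have : v ∈ LinearMap.range g := by rw [hg]; exact hv'
        obtain ⟨w, hw⟩ := this
        exact ⟨w, fun _ => hw, fun h => absurd h hv⟩
      · exact ⟨0, fun h => absurd h hv', fun _ => rfl⟩
  choose σ hσ hσ0 using hsec
  classical
  refine ⟨k, fun i j => g (Pi.single j 1) i, fun j a => Finsupp.onFinset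
    (Finset.univ.biUnion fun i => (x i a).support) (fun c => σ (fun i => x i a c) j) ?_, ?_, ?_⟩
  · intro c hc
    by_contra hcon
    apply hc
    rw [hσ0]
    · rfl
    · funext i
      by_contra h
      exact hcon (by simpa using ⟨i, h⟩)
  · intro i
    funext a
    ext c
    have h0 : φ (fun i => x i a c) = 0 := by
      rw [hφ]
      have := DFunLike.congr_fun (congrFun hx a) c
      simpa [Finset.sum_apply, Finsupp.finsetSum_apply] using this
    have h3 := hσ _ h0
    simp only [Finset.sum_apply, Pi.smul_apply, Finsupp.finsetSum_apply, Finsupp.smul_apply,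
      Finsupp.onFinset_apply, smul_eq_mul]
    conv_lhs => rw [← congrFun h3 i]
    conv_lhs => rw [pi_eq_sum_univ' (σ fun i => x i a c)]
    rw [map_sum, Finset.sum_apply]
    refine Finset.sum_congr rfl fun j _ => ?_
    rw [map_smul, Pi.smul_apply, smul_eq_mul, mul_comm]
  · intro j
    rw [← hφ]
    have : g (Pi.single j 1) ∈ LinearMap.ker φ := by rw [← hg]; exact ⟨_, rfl⟩
    exact this

theorem preenvelope (M : Type u) [AddCommGroup M] [Module R M]
    (Q : Type u) [AddCommGroup Q] [Module R Q] [Module.Projective R Q] (φ : M →ₗ[R] Q) :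
    ∃ ψ : ((M →ₗ[R] (M × ℕ →₀ R)) → (M × ℕ →₀ R)) →ₗ[R] Q,
      ψ ∘ₗ (LinearMap.pi fun l => l) = φ := by
  obtain ⟨s, hs⟩ := Module.projective_def.1 (inferInstance : Module.Projective R Q)
  let φ' : M →ₗ[R] (Q →₀ R) := s ∘ₗ φ
  let S : Set Q := {q | ∃ m, φ' m q ≠ 0}
  have hm : ∀ q : Q, ∃ m, q ∈ S → φ' m q ≠ 0 := by
    intro q
    by_cases h : q ∈ S
    · obtain ⟨m, hm⟩ := h
      exact ⟨m, fun _ => hm⟩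
    · exact ⟨0, fun h' => absurd h' h⟩
  choose c hc using hm
  have hen : ∀ m, ∃ e : Q → ℕ, Set.InjOn e {q | φ' m q ≠ 0} := by
    intro m
    have : Set.Countable {q | φ' m q ≠ 0} := by
      have h : {q | φ' m q ≠ 0} = ((φ' m).support : Set Q) := by ext; simp
      rw [h]
      exact (Finset.finite_toSet _).countable
    exact Set.countable_iff_exists_injOn.1 this
  choose e he using hen
  let j : Q → M × ℕ := fun q => (c q, e (c q) q)
  have hj : Set.InjOn j S := by
    intro q hq q' hq' h
    have h1 : c q = c q' := congrArg Prod.fst h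
    have h2 : e (c q) q = e (c q') q' := congrArg Prod.snd h
    rw [← h1] at h2
    have h3 := hc q' hq'
    rw [← h1] at h3
    exact he (c q) (hc q hq) h3 h2
  let k : M × ℕ → Q := Function.invFunOn j S
  have hk : ∀ q ∈ S, k (j q) = q := fun q hq => hj.leftInvOn_invFunOn hq
  refine ⟨Finsupp.linearCombination R id ∘ₗ Finsupp.lmapDomain R R k ∘ₗ
    LinearMap.proj (Finsupp.lmapDomain R R j ∘ₗ φ'), LinearMap.ext fun m => ?_⟩
  have h1 : Finsupp.mapDomain k (Finsupp.mapDomain j (φ' m)) = φ' m := by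
    rw [← Finsupp.mapDomain_comp]
    conv_rhs => rw [← Finsupp.mapDomain_id (v := φ' m)]
    refine Finsupp.mapDomain_congr fun q hq => ?_
    exact hk q ⟨m, by simpa using hq⟩
  have h2 : Finsupp.linearCombination R id (Finsupp.mapDomain k (Finsupp.mapDomain j (φ' m)))
      = φ m := by
    rw [h1]; exact hs _
  exact h2

/-- the class of modules in the hypothesis -/
def Good (M : ModuleCat.{u} R) : Prop :=
  ∀ (Q : ModuleCat.{u} R) (k : ℕ), HasProjectiveDimensionLT Q k → ∀ i, EV M Q (i + 1)

theorem proj_psc (X : ModuleCat.{u} R) : Projective X.projectiveShortComplex.X₂ :=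
  (IsProjective.iff_projective (R := R) _).1
    (inferInstanceAs (Module.Projective R X.projectiveShortComplex.X₂))

theorem lift_psc (M : ModuleCat.{u} R) (hM : Good M) (X : ModuleCat.{u} R) (k : ℕ)
    (hX : HasProjectiveDimensionLT X k) (f : M ⟶ X) :
    ∃ g : M ⟶ X.projectiveShortComplex.X₂, g ≫ X.projectiveShortComplex.g = f := by
  have hS := X.shortExact_projectiveShortComplex
  have := proj_psc X
  refine lift_of_ext_one hS M (hM _ (k+1) ?_ 0) f
  exact hS.hasProjectiveDimensionLT_X₁ (k+1) (hasProjectiveDimensionLT_of_ge _ 1 _ (by omega))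
    (hasProjectiveDimensionLT_of_ge _ k _ (by omega))

theorem step (n m : ℕ) (hcoh : IsCoherentRing R)
    (hFC : ∀ (P : ModuleCat.{u} R), Module.FinitePresentation R P →
      ExtVanish R P (ModuleCat.of R R) (n + 1))
    (hperf : ∀ (F : ModuleCat.{u} R), Module.Flat R F → ProjDimLE R F m)
    (M : ModuleCat.{u} R) (hM : Good M) :
    ∃ (P : ModuleCat.{u} R) (f : M →ₗ[R] P), Module.Projective R P ∧ Function.Injective f ∧
      (∀ (Q : ModuleCat.{u} R), Module.Projective R Q → ∀ φ : M →ₗ[R] Q,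
        ∃ ψ : P →ₗ[R] Q, ψ ∘ₗ f = φ) ∧ Good (ModuleCat.of R (P ⧸ LinearMap.range f)) := by
  let F := ModuleCat.of R ((M →ₗ[R] (M × ℕ →₀ R)) → (M × ℕ →₀ R))
  let e : M →ₗ[R] F := LinearMap.pi fun l => l
  have hF := (projDimLE_iff _ _).1 (hperf F (flat_prod hcoh _ _))
  obtain ⟨f, hf⟩ := lift_psc M hM F _ hF (ModuleCat.ofHom e)
  have hf' : ∀ x, F.projectiveShortComplex.g.hom (f.hom x) = e x := fun x =>
    LinearMap.congr_fun (congrArg ModuleCat.Hom.hom hf) x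
  have hP := proj_psc F
  have hP' : Module.Projective R F.projectiveShortComplex.X₂ := inferInstance
  have hext : ∀ (Q : ModuleCat.{u} R), Module.Projective R Q → ∀ φ : M →ₗ[R] Q,
        ∃ ψ : F.projectiveShortComplex.X₂ →ₗ[R] Q, ψ ∘ₗ f.hom = φ := by
    intro Q hQ φ
    obtain ⟨ψ, hψ⟩ := preenvelope M Q φ
    refine ⟨ψ ∘ₗ F.projectiveShortComplex.g.hom, ?_⟩
    rw [← hψ]
    exact LinearMap.ext fun x => congrArg ψ (hf' x)
  have hinj : Function.Injective f.hom := by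
    let E := Injective.under M
    have hEi : Injective E := inferInstanceAs (Injective (Injective.under M))
    have hE : Module.Injective R E := (Module.injective_iff_injective_object R E).2 hEi
    have hEpd := pd_of_ev m hperf n E fun P hP => ev_char hcoh E n P hP
      ((extVanish_iff _ _ _).1 (hFC P hP))
    obtain ⟨g, hg⟩ := lift_psc M hM E _ hEpd (Injective.ι M)
    have := proj_psc E
    obtain ⟨ψ, hψ⟩ := hext E.projectiveShortComplex.X₂ inferInstance g.hom
    have hι : Function.Injective (Injective.ι M).hom := (ModuleCat.mono_iff_injective _).1 inferInstance
    rw [← hg, ModuleCat.hom_comp, ← hψ] at hι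
    intro x y hxy
    apply hι
    simp only [LinearMap.comp_apply, hxy]
  refine ⟨F.projectiveShortComplex.X₂, f.hom, hP', hinj, hext, ?_⟩
  let T : ShortComplex (ModuleCat.{u} R) := ShortComplex.mk f
    (ModuleCat.ofHom (LinearMap.range f.hom).mkQ) (by
      ext x
      exact (Submodule.Quotient.mk_eq_zero _).2 ⟨x, rfl⟩)
  have hT : T.ShortExact := by
    refine @ShortComplex.ShortExact.mk _ _ _ _ ?_ ?_ ?_
    · rw [ShortComplex.moduleCat_exact_iff]
      intro x hx
      exact (Submodule.Quotient.mk_eq_zero _).1 hx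
    · exact (ModuleCat.mono_iff_injective _).2 hinj
    · exact (ModuleCat.epi_iff_surjective _).2 (Submodule.mkQ_surjective _)
  have hT2 : Projective T.X₂ := hP
  intro Q k hQ i
  cases i with
  | succ i => exact ev_contra_up hT Q (i+1) (hM Q k hQ i)
  | zero =>
    refine ext_one_of_extend hT Q fun φ => ?_
    obtain ⟨g, hg⟩ := lift_psc M hM Q k hQ φ
    have := proj_psc Q
    obtain ⟨ψ, hψ⟩ := hext Q.projectiveShortComplex.X₂ inferInstance g.hom
    refine ⟨ModuleCat.ofHom ψ ≫ Q.projectiveShortComplex.g, ?_⟩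
    rw [← Category.assoc, ← hg]
    congr 1
    exact ModuleCat.hom_ext hψ

end Helpers

theorem stmt3 (R : Type u) [CommRing R] (n m : ℕ)
    (hcoh : IsCoherentRing R)
    (hFC : ∀ (P : ModuleCat.{u} R), Module.FinitePresentation R P →
      ExtVanish R P (ModuleCat.of R R) (n + 1))
    (hperf : ∀ (F : ModuleCat.{u} R), Module.Flat R F → ProjDimLE R F m)
    (M : ModuleCat.{u} R)
    (hM : ∀ (Q : ModuleCat.{u} R), HasFinProjDim R Q →
      ∀ i : ℕ, 1 ≤ i → ExtVanish R M Q i) :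
    ∃ (P : ℕ → ModuleCat.{u} R) (f : M →ₗ[R] P 0)
      (d : ∀ i : ℕ, P i →ₗ[R] P (i + 1)),
      (∀ i, Module.Projective R (P i)) ∧
      -- exactness of 0 → M → P⁰ → P¹ → ⋯
      Function.Injective f ∧
      Function.Exact f (d 0) ∧
      (∀ i, Function.Exact (d i) (d (i + 1))) ∧
      -- the sequence stays exact after applying Hom_R(−, Q) for projective Q
      (∀ (Q : ModuleCat.{u} R), Module.Projective R Q →
        Function.Surjective (fun φ : P 0 →ₗ[R] Q => φ ∘ₗ f) ∧
        Function.Exact (fun φ : P 1 →ₗ[R] Q => φ ∘ₗ d 0)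
          (fun φ : P 0 →ₗ[R] Q => φ ∘ₗ f) ∧
        (∀ i, Function.Exact (fun φ : P (i + 2) →ₗ[R] Q => φ ∘ₗ d (i + 1))
          (fun φ : P (i + 1) →ₗ[R] Q => φ ∘ₗ d i))) := by
  have hgood : Good M := by
    intro Q k hQ i
    rw [← extVanish_iff]
    exact hM Q ⟨k, (projDimLE_iff _ _).2 (hasProjectiveDimensionLT_of_ge _ k _ (by omega))⟩ _
      (by omega)
  have hstep := fun X : {X : ModuleCat.{u} R // Good X} => step n m hcoh hFC hperf X.1 X.2
  choose P f hP hf hext hc using hstep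
  let N : ℕ → {X : ModuleCat.{u} R // Good X} := fun k =>
    Nat.rec ⟨M, hgood⟩ (fun _ X => ⟨ModuleCat.of R (P X ⧸ LinearMap.range (f X)), hc X⟩) k
  let q : ∀ i, P (N i) →ₗ[R] (N (i+1)).1 := fun i => (LinearMap.range (f (N i))).mkQ
  have hq : ∀ i, Function.Surjective (q i) := fun i => Submodule.mkQ_surjective _
  have hfq : ∀ i, Function.Exact (f (N i)) (q i) := fun i x =>
    Submodule.Quotient.mk_eq_zero _
  have hdesc : ∀ i (Q : ModuleCat.{u} R), Module.Projective R Q → ∀ φ : P (N i) →ₗ[R] Q,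
      φ ∘ₗ f (N i) = 0 → ∃ ψ : P (N (i+1)) →ₗ[R] Q, ψ ∘ₗ (f (N (i+1)) ∘ₗ q i) = φ := by
    intro i Q hQ φ h
    have hle : LinearMap.range (f (N i)) ≤ LinearMap.ker φ := by
      rintro _ ⟨x, rfl⟩
      exact LinearMap.congr_fun h x
    obtain ⟨ψ, hψ⟩ := hext (N (i+1)) Q hQ ((LinearMap.range (f (N i))).liftQ φ hle)
    refine ⟨ψ, LinearMap.ext fun x => ?_⟩
    exact LinearMap.congr_fun hψ (q i x)
  have hzero : ∀ i x, q i (f (N i) x) = 0 := fun i x => (hfq i _).2 ⟨x, rfl⟩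
  refine ⟨fun i => P (N i), f (N 0), fun i => f (N (i+1)) ∘ₗ q i, fun i => hP _, hf _, ?_, ?_, ?_⟩
  · intro x
    rw [← hfq 0 x]
    exact map_eq_zero_iff _ (hf (N 1))
  · intro i x
    have h1 : (f (N (i+1+1)) ∘ₗ q (i+1)) x = 0 ↔ q (i+1) x = 0 := map_eq_zero_iff _ (hf _)
    rw [h1, hfq (i+1) x]
    constructor
    · rintro ⟨y, rfl⟩
      obtain ⟨z, rfl⟩ := hq i y
      exact ⟨z, rfl⟩
    · rintro ⟨z, rfl⟩
      exact ⟨q i z, rfl⟩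
  · intro Q hQ
    refine ⟨fun φ => hext (N 0) Q hQ φ, ?_, ?_⟩
    · intro φ
      constructor
      · intro h
        exact hdesc 0 Q hQ φ h
      · rintro ⟨ψ, rfl⟩
        refine LinearMap.ext fun x => ?_
        change ψ (f (N 1) (q 0 (f (N 0) x))) = 0
        rw [hzero, map_zero, map_zero]
    · intro i φ
      constructor
      · intro h
        refine hdesc (i+1) Q hQ φ (LinearMap.ext fun x => ?_)
        obtain ⟨z, rfl⟩ := hq i x
        exact LinearMap.congr_fun h z
      · rintro ⟨ψ, rfl⟩
        refine LinearMap.ext fun x => ?_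
        change ψ (f (N (i+2)) (q (i+1) (f (N (i+1)) (q i x)))) = 0
        have h0 := hzero (i+1) (q i x)
        refine (congrArg (fun t => ψ (f (N (i+2)) t)) h0).trans ?_
        exact (congrArg ψ (map_zero (f (N (i+2))))).trans (map_zero ψ)

end
end

section
/- Let R be a commutative ring and let T = R ⋉ R be the trivial extension of R by itself. Then the global cotorsion dimensions of T and of R coincide: for every nonnegative integer n, every flat T-module has projective dimension at most n over T if and only if every flat R-module has projective dimension at most n over R. -/
open CategoryTheory

noncomputable section

universe u

open TensorProduct

theorem extVanish_iff_s4 (R : Type u) [CommRing R] (M N : ModuleCat.{u} R) (k : ℕ) :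
    ExtVanish R M N (k + 1) ↔ Subsingleton (Abelian.Ext.{u} M N (k + 1)) := by
  let P := projectiveResolution M
  have h1 : ExtVanish R M N (k + 1) ↔
      ∀ f : P.complex.X (k + 1) ⟶ N, P.complex.d (k + 2) (k + 1) ≫ f = 0 →
        ∃ g : P.complex.X k ⟶ N, P.complex.d (k + 1) k ≫ g = f := by
    unfold ExtVanish extGroup
    rw [← ModuleCat.isZero_iff_subsingleton, (P.isoExt (R := R) (k + 1) N).isZero_iff,
      ← HomologicalComplex.exactAt_iff_isZero_homology,
      HomologicalComplex.exactAt_iff' _ k (k + 1) (k + 2) (by simp) (by simp),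
      ShortComplex.moduleCat_exact_iff]
    rfl
  rw [h1]
  constructor
  · intro h
    refine ⟨fun a b => ?_⟩
    have key : ∀ a : Abelian.Ext.{u} M N (k + 1), a = 0 := by
      intro a
      obtain ⟨f, hf, rfl⟩ := P.extMk_surjective a (k + 2) rfl
      exact (P.extMk_eq_zero_iff f (k + 2) rfl hf k rfl).2 (h f hf)
    rw [key a, key b]
  · intro h f hf
    exact (P.extMk_eq_zero_iff f (k + 2) rfl hf k rfl).1 (Subsingleton.elim _ _)

theorem projDimLE_iff_s4 (R : Type u) [CommRing R] (M : ModuleCat.{u} R) (n : ℕ) :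
    ProjDimLE R M n ↔ HasProjectiveDimensionLE M n := by
  unfold ProjDimLE
  constructor
  · intro h
    refine (hasProjectiveDimensionLT_iff.{u} M (n + 1)).2 ?_
    intro i hi Y e
    obtain ⟨k, rfl⟩ : ∃ k, i = k + 1 := ⟨i - 1, by omega⟩
    have := (extVanish_iff_s4 R M Y k).1 (h Y _ (by omega))
    exact Subsingleton.elim _ _
  · intro h N j hj
    obtain ⟨k, rfl⟩ : ∃ k, j = k + 1 := ⟨j - 1, by omega⟩
    exact (extVanish_iff_s4 R M N k).2
      (HasProjectiveDimensionLT.subsingleton M (n + 1) (k + 1) (by omega) N)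

theorem flat_of_exact {A K P F : Type u} [CommRing A] [AddCommGroup K] [AddCommGroup P]
    [AddCommGroup F] [Module A K] [Module A P] [Module A F] [Module.Flat A P] [Module.Flat A F]
    (i : K →ₗ[A] P) (p : P →ₗ[A] F) (hi : Function.Injective i) (hp : Function.Surjective p)
    (h : Function.Exact i p) : Module.Flat A K := by
  rw [Module.Flat.iff_lTensor_preserves_injective_linearMap]
  intro N N' _ _ _ _ f hf
  have h1 : Function.Injective (i.rTensor N) := by
    have := LinearMap.lTensor_injective_of_exact_of_flat p hp i hi h N
    rw [← LinearMap.lTensor_inj_iff_rTensor_inj]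
    exact this
  have h2 : Function.Injective (f.lTensor P) :=
    Module.Flat.lTensor_preserves_injective_linearMap f hf
  have h3 : Function.Injective ((i.rTensor N') ∘ (f.lTensor K)) := by
    have : (i.rTensor N') ∘ (f.lTensor K) = (f.lTensor P) ∘ (i.rTensor N) := by
      rw [← LinearMap.coe_comp, ← LinearMap.coe_comp, LinearMap.rTensor_comp_lTensor,
        LinearMap.lTensor_comp_rTensor]
    rw [this]
    exact h2.comp h1
  exact h3.of_comp

theorem descend (A B : Type u) [CommRing A] [CommRing B] [Algebra A B]
    (hD : ∀ (K : Type u) [AddCommGroup K] [Module A K], Module.Flat A K →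
      Module.Projective B (B ⊗[A] K) → Module.Projective A K) (n : ℕ) :
    ∀ (F : ModuleCat.{u} A), Module.Flat A F →
      HasProjectiveDimensionLE (ModuleCat.of B (B ⊗[A] F)) n → HasProjectiveDimensionLE F n := by
  induction n with
  | zero =>
    intro F hF h
    rw [← projective_iff_hasProjectiveDimensionLE_zero, ← IsProjective.iff_projective] at h ⊢
    exact hD F hF h
  | succ n ih =>
    intro F hF h
    let S := F.projectiveShortComplex
    have hS := F.shortExact_projectiveShortComplex
    have hP : Module.Projective A S.X₂ := (IsProjective.iff_projective _).2 inferInstance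
    have hi : Function.Injective S.f.hom := hS.moduleCat_injective_f
    have hp : Function.Surjective S.g.hom := hS.moduleCat_surjective_g
    have he : Function.Exact S.f.hom S.g.hom :=
      (ShortComplex.ShortExact.moduleCat_exact_iff_function_exact S).1 hS.exact
    have : Module.Flat A S.X₃ := hF
    have hK : Module.Flat A S.X₁ := flat_of_exact S.f.hom S.g.hom hi hp he
    refine (hS.hasProjectiveDimensionLT_X₃_iff n inferInstance).2 (ih S.X₁ hK ?_)
    let S' : ShortComplex (ModuleCat.{u} B) := ShortComplex.mk
      (ModuleCat.ofHom (S.f.hom.baseChange B)) (ModuleCat.ofHom (S.g.hom.baseChange B)) (by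
        rw [← ModuleCat.ofHom_comp, ← LinearMap.baseChange_comp, ← ModuleCat.hom_comp, S.zero]
        simp)
    have hS' : S'.ShortExact := by
      have := LinearMap.lTensor_injective_of_exact_of_flat S.g.hom hp S.f.hom hi he B
      have hsur : Function.Surjective (S.g.hom.lTensor B) := LinearMap.lTensor_surjective B hp
      have hex : Function.Exact (S.f.hom.lTensor B) (S.g.hom.lTensor B) := lTensor_exact B he hp
      exact
        { exact := (ShortComplex.ShortExact.moduleCat_exact_iff_function_exact S').2 hex
          mono_f := (ModuleCat.mono_iff_injective _).2 this
          epi_g := (ModuleCat.epi_iff_surjective _).2 hsur }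
    have hP' : Projective S'.X₂ := (IsProjective.iff_projective _).1
      (inferInstanceAs (Module.Projective B (B ⊗[A] S.X₂)))
    exact (hS'.hasProjectiveDimensionLT_X₃_iff n hP').1 h

theorem one_tmul_eq_zero_iff {T R M : Type u} [CommRing T] [CommRing R] [Algebra T R]
    (hs : Function.Surjective (algebraMap T R)) [AddCommGroup M] [Module T M] (m : M) :
    (1 : R) ⊗ₜ[T] m = 0 ↔ m ∈ (RingHom.ker (algebraMap T R)) • (⊤ : Submodule T M) := by
  constructor
  · intro h
    let I := RingHom.ker (algebraMap T R)
    have hex : Function.Exact (Submodule.subtype I) (Algebra.linearMap T R) := by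
      intro x
      simp [I, RingHom.mem_ker]
    have := rTensor_exact M hex hs
    obtain ⟨y, hy⟩ := (this ((1 : T) ⊗ₜ m)).1 (by simpa using h)
    have key : ∀ y : I ⊗[T] M, TensorProduct.lid T M ((Submodule.subtype I).rTensor M y) ∈
        I • (⊤ : Submodule T M) := by
      intro y
      induction y with
      | zero => simp
      | add a b ha hb => rw [map_add, map_add]; exact add_mem ha hb
      | tmul a b => simpa using Submodule.smul_mem_smul a.2 (Submodule.mem_top (x := b))
    have := key y
    rw [hy] at this
    simpa using this
  · intro h
    refine Submodule.smul_induction_on h ?_ ?_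
    · intro r hr n _
      rw [TensorProduct.tmul_smul, TensorProduct.smul_tmul', Algebra.smul_def,
        (RingHom.mem_ker).1 hr]
      simp
    · intro x y hx hy
      rw [TensorProduct.tmul_add, hx, hy, add_zero]

theorem injective_of_nilp {T R P K : Type u} [CommRing T] [CommRing R] [Algebra T R]
    [AddCommGroup K] [Module T K] [AddCommGroup P] [Module T P]
    (hs : Function.Surjective (algebraMap T R))
    (hnil : ∀ x ∈ RingHom.ker (algebraMap T R), ∀ y ∈ RingHom.ker (algebraMap T R), x * y = 0)
    (hK : Module.Flat T K) (φ : P →ₗ[T] K) (hsurj : Function.Surjective φ)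
    (hmem : ∀ x, φ x = 0 → x ∈ RingHom.ker (algebraMap T R) • (⊤ : Submodule T P)) :
    Function.Injective φ := by
  let I := RingHom.ker (algebraMap T R)
  have hI2 : ∀ {M : Type u} [AddCommGroup M] [Module T M] (a : T) (x : M), a ∈ I →
      x ∈ I • (⊤ : Submodule T M) → a • x = 0 := by
    intro M _ _ a x ha hx
    refine Submodule.smul_induction_on hx ?_ ?_
    · intro r hr n _
      rw [smul_smul, hnil a ha r hr, zero_smul]
    · intro x y hx hy
      rw [smul_add, hx, hy, add_zero]
  let C := LinearMap.ker φ
  have hC : ∀ x : C, x ∈ I • (⊤ : Submodule T C) := by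
    intro x
    refine (one_tmul_eq_zero_iff hs x).1 ?_
    have hinj := LinearMap.lTensor_injective_of_exact_of_flat φ hsurj C.subtype
      C.injective_subtype (LinearMap.exact_subtype_ker_map φ) R
    apply hinj
    rw [map_zero, LinearMap.lTensor_tmul, one_tmul_eq_zero_iff hs]
    exact hmem x (LinearMap.mem_ker.1 x.2)
  rw [← LinearMap.ker_eq_bot, eq_bot_iff]
  intro x hx
  have := hC ⟨x, hx⟩
  have h0 : (⟨x, hx⟩ : C) = 0 := by
    refine Submodule.smul_induction_on this ?_ ?_
    · intro r hr n _
      exact hI2 r n hr (hC n)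
    · intro x y hx hy
      rw [hx, hy, add_zero]
  simpa using congrArg Subtype.val h0

theorem projective_of_nilp {T R K : Type u} [CommRing T] [CommRing R] [Algebra T R] [Algebra R T]
    [IsScalarTower R T R] [AddCommGroup K] [Module T K] [Module R K] [IsScalarTower R T K]
    (hnil : ∀ x ∈ RingHom.ker (algebraMap T R), ∀ y ∈ RingHom.ker (algebraMap T R), x * y = 0)
    (hK : Module.Flat T K) (hP : Module.Projective R (R ⊗[T] K)) : Module.Projective T K := by
  have hRTR : ∀ r : R, algebraMap T R (algebraMap R T r) = r := fun r =>
    (IsScalarTower.algebraMap_apply R T R r).symm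
  have hs : Function.Surjective (algebraMap T R) := fun r => ⟨_, hRTR r⟩
  let I := RingHom.ker (algebraMap T R)
  have hI2 : ∀ {M : Type u} [AddCommGroup M] [Module T M] (a : T) (x : M), a ∈ I →
      x ∈ I • (⊤ : Submodule T M) → a • x = 0 := by
    intro M _ _ a x ha hx
    refine Submodule.smul_induction_on hx ?_ ?_
    · intro r hr n _
      rw [smul_smul, hnil a ha r hr, zero_smul]
    · intro x y hx hy
      rw [smul_add, hx, hy, add_zero]
  let π : K →ₗ[R] R ⊗[T] K :=
    { toFun := fun k => 1 ⊗ₜ k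
      map_add' := fun a b => TensorProduct.tmul_add _ _ _
      map_smul' := fun r k => by
        rw [← algebraMap_smul T r k, TensorProduct.tmul_smul, TensorProduct.smul_tmul',
          Algebra.smul_def, hRTR]
        simp [TensorProduct.smul_tmul'] }
  have hπ : Function.Surjective π := by
    intro x
    induction x with
    | zero => exact ⟨0, map_zero _⟩
    | add a b ha hb =>
      obtain ⟨a, rfl⟩ := ha
      obtain ⟨b, rfl⟩ := hb
      exact ⟨a + b, map_add _ _ _⟩
    | tmul r k =>
      refine ⟨r • k, ?_⟩
      rw [map_smul]
      simp [π, TensorProduct.smul_tmul']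
  obtain ⟨s, hsec⟩ := Module.projective_lifting_property π LinearMap.id hπ
  have hsec : ∀ x, π (s x) = x := fun x => LinearMap.congr_fun hsec x
  let φ : T ⊗[R] (R ⊗[T] K) →ₗ[T] K := LinearMap.liftBaseChange T s
  have hφ : ∀ t x, φ (t ⊗ₜ x) = t • s x := fun t x => by simp [φ]
  have hdiff : ∀ k, k - s (π k) ∈ I • (⊤ : Submodule T K) := by
    intro k
    rw [← one_tmul_eq_zero_iff hs]
    change π (k - s (π k)) = 0
    rw [map_sub, hsec, sub_self]
  have hIr : I • (⊤ : Submodule T K) ≤ LinearMap.range φ := by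
    rw [Submodule.smul_le]
    intro a ha k _
    refine ⟨a ⊗ₜ π k, ?_⟩
    rw [hφ]
    have := hI2 a _ ha (hdiff k)
    rw [smul_sub, sub_eq_zero] at this
    exact this.symm
  have hsurj : Function.Surjective φ := by
    intro k
    obtain ⟨y, hy⟩ := hIr (hdiff k)
    refine ⟨y + 1 ⊗ₜ π k, ?_⟩
    rw [map_add, hy, hφ]
    simp
  have hmod : ∀ x, x - 1 ⊗ₜ π (φ x) ∈ I • (⊤ : Submodule T (T ⊗[R] (R ⊗[T] K))) := by
    intro x
    induction x with
    | zero => simp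
    | add a b ha hb =>
      have := add_mem ha hb
      rw [map_add, map_add, TensorProduct.tmul_add]
      convert this using 1
      abel
    | tmul t x =>
      have h1 : π (φ (t ⊗ₜ x)) = algebraMap T R t • x := by
        rw [hφ]
        conv_rhs => rw [← hsec x]
        change (1 : R) ⊗ₜ (t • s x) = algebraMap T R t • ((1 : R) ⊗ₜ[T] s x)
        rw [TensorProduct.tmul_smul, TensorProduct.smul_tmul', TensorProduct.smul_tmul',
          Algebra.smul_def, smul_eq_mul]
      have h2 : t ⊗ₜ x - (1 : T) ⊗ₜ π (φ (t ⊗ₜ x)) =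
          (t - algebraMap R T (algebraMap T R t)) • ((1 : T) ⊗ₜ[R] x) := by
        rw [h1, TensorProduct.tmul_smul, TensorProduct.smul_tmul', TensorProduct.smul_tmul',
          ← TensorProduct.sub_tmul, Algebra.smul_def]
        simp
      rw [h2]
      refine Submodule.smul_mem_smul ?_ Submodule.mem_top
      rw [RingHom.mem_ker, map_sub, hRTR, sub_self]
  have hinj : Function.Injective φ := by
    refine injective_of_nilp hs hnil hK φ hsurj ?_
    intro x hx
    have := hmod x
    rw [hx, map_zero, TensorProduct.tmul_zero, sub_zero] at this
    exact this
  exact Module.Projective.of_equiv (LinearEquiv.ofBijective φ ⟨hinj, hsurj⟩)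

theorem perfect_of (A B : Type u) [CommRing A] [CommRing B] [Algebra A B]
    (hD : ∀ (K : Type u) [AddCommGroup K] [Module A K], Module.Flat A K →
      Module.Projective B (B ⊗[A] K) → Module.Projective A K) (n : ℕ)
    (h : ∀ (F : ModuleCat.{u} B), Module.Flat B F → ProjDimLE B F n) :
    ∀ (F : ModuleCat.{u} A), Module.Flat A F → ProjDimLE A F n := by
  intro F hF
  rw [projDimLE_iff_s4]
  refine descend A B hD n F hF ?_
  rw [← projDimLE_iff_s4]
  exact h _ (inferInstanceAs (Module.Flat B (B ⊗[A] F)))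

theorem stmt4 (R : Type u) [CommRing R] (n : ℕ) :
    (∀ (F : ModuleCat.{u} (TrivSqZeroExt R R)), Module.Flat (TrivSqZeroExt R R) F →
      ProjDimLE (TrivSqZeroExt R R) F n) ↔
    (∀ (F : ModuleCat.{u} R), Module.Flat R F → ProjDimLE R F n) := by
  let : Algebra (TrivSqZeroExt R R) R := (TrivSqZeroExt.fstHom R R R).toRingHom.toAlgebra
  have hmap : ∀ x : TrivSqZeroExt R R, algebraMap (TrivSqZeroExt R R) R x = x.fst := fun _ => rfl
  have : IsScalarTower R (TrivSqZeroExt R R) R := IsScalarTower.of_algebraMap_eq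
    (R := R) (S := TrivSqZeroExt R R) (A := R) fun r => by exact (TrivSqZeroExt.fst_inl R r).symm
  constructor
  · intro h
    refine perfect_of R (TrivSqZeroExt R R) ?_ n h
    intro K _ _ _ hP
    have e := TensorProduct.AlgebraTensorModule.cancelBaseChange R (TrivSqZeroExt R R) R R K
    exact Module.Projective.of_equiv (e.trans (TensorProduct.lid R K))
  · intro h
    refine perfect_of (TrivSqZeroExt R R) R ?_ n h
    intro K _ _ hF hP
    let : Module R K := Module.compHom K (algebraMap R (TrivSqZeroExt R R))
    have : IsScalarTower R (TrivSqZeroExt R R) K := IsScalarTower.of_algebraMap_smul fun _ _ => rfl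
    refine projective_of_nilp (R := R) ?_ hF hP
    intro x hx y hy
    rw [RingHom.mem_ker, hmap] at hx hy
    ext <;> simp [hx, hy]

end
end

section
/- Let R be a commutative coherent ring in which every injective R-module is flat (i.e., R is an IF-ring, equivalently the Gorenstein weak global dimension of R is 0), and let G be a finite abelian group whose order is invertible in R. Then the group ring RG is a coherent ring in which every injective RG-module is flat, and the global cotorsion dimensions of R and RG coincide: for every nonnegative integer n, every flat RG-module has projective dimension at most n over RG if and only if every flat R-module has projective dimension at most n over R. (Consequently G-wdim(RG) = 0 and G-gldim(RG) = G-gldim(R).) -/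
open CategoryTheory

noncomputable section

universe u

theorem fp_of_fg_sub (R : Type u) [CommRing R] (h : IsCoherentRing R) :
    ∀ (n : ℕ) (N : Submodule R (Fin n → R)), N.FG → Module.FinitePresentation R N := by
  intro n
  induction n with
  | zero => intro N _; infer_instance
  | succ n ih =>
    intro N hN
    let p : (Fin (n+1) → R) →ₗ[R] R := LinearMap.proj 0
    let t : (Fin (n+1) → R) →ₗ[R] (Fin n → R) := LinearMap.funLeft R R Fin.succ
    let q : N →ₗ[R] (N.map p) := p.submoduleMap N
    have hq : Function.Surjective q := p.submoduleMap_surjective N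
    have : Module.FinitePresentation R (N.map p) := h _ (hN.map p)
    have : Module.Finite R N := Module.Finite.iff_fg.2 hN
    have hk : (LinearMap.ker q).FG := Module.FinitePresentation.fg_ker q hq
    let f : LinearMap.ker q →ₗ[R] (Fin n → R) := t ∘ₗ N.subtype ∘ₗ (LinearMap.ker q).subtype
    have hf : Function.Injective f := by
      rw [injective_iff_map_eq_zero]
      rintro ⟨⟨x, hx⟩, hx'⟩ h0
      have h1 : x 0 = 0 := congrArg Subtype.val (LinearMap.mem_ker.1 hx')
      have h2 : ∀ i : Fin n, x i.succ = 0 := fun i => congrFun h0 i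
      ext i
      refine Fin.cases h1 h2 i
    have : Module.Finite R (LinearMap.ker q) := Module.Finite.iff_fg.2 hk
    have : Module.FinitePresentation R (LinearMap.range f) :=
      ih _ (Module.Finite.iff_fg.1 inferInstance)
    have : Module.FinitePresentation R (LinearMap.ker q) :=
      Module.FinitePresentation.of_equiv (R := R) (M := LinearMap.range f) (N := LinearMap.ker q)
        (LinearEquiv.ofInjective f hf).symm
    exact Module.finitePresentation_of_ker q hq

theorem coherent_of_free (R S : Type u) [CommRing R] [CommRing S] [Algebra R S]
    [Module.Free R S] [Module.Finite R S] (h : IsCoherentRing R) : IsCoherentRing S := by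
  intro I hI
  have : Module.Finite S I := Module.Finite.iff_fg.2 hI
  have : Module.Finite R I := Module.Finite.trans S I
  have : Module.FinitePresentation R I := by
    let e := ((Module.Free.chooseBasis R S).reindex (Fintype.equivFin _)).equivFun
    let f : I →ₗ[R] (Fin (Fintype.card (Module.Free.ChooseBasisIndex R S)) → R) := e.toLinearMap ∘ₗ I.subtype.restrictScalars R
    have hf : Function.Injective f := e.injective.comp Subtype.val_injective
    have : Module.FinitePresentation R (LinearMap.range f) :=
      fp_of_fg_sub R h _ _ (Module.Finite.iff_fg.1 inferInstance)
    exact Module.FinitePresentation.of_equiv (LinearEquiv.ofInjective f hf).symm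
  obtain ⟨n, l, hl⟩ := Module.Finite.exists_fin' S I
  refine Module.finitePresentation_of_surjective l hl ?_
  have : (LinearMap.ker (l.restrictScalars R)).FG := 
    Module.FinitePresentation.fg_ker (l.restrictScalars R) hl
  rw [LinearMap.ker_restrictScalars] at this
  exact Submodule.FG.of_restrictScalars (R := R) this

section
universe v₁ v₂ u₁ u₂
open Limits
variable {A : Type u₁} [Category.{v₁} A] [Abelian A] {B : Type u₂} [Category.{v₂} B] [Abelian B]

def mapRes (F : A ⥤ B) [F.Additive] [F.PreservesHomology] [F.PreservesProjectiveObjects] {X : A}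
    (P : ProjectiveResolution X) : ProjectiveResolution (F.obj X) where
  complex := (F.mapHomologicalComplex _).obj P.complex
  projective n := F.projective_obj_of_projective (P.projective n)
  π := (F.mapHomologicalComplex _).map P.π ≫
    (HomologicalComplex.singleMapHomologicalComplex F (ComplexShape.down ℕ) 0).hom.app X
  quasiIso := inferInstance
end

theorem extVanish_iff_s12 (R : Type u) [CommRing R] (M N : ModuleCat.{u} R)
    (P : ProjectiveResolution M) (j : ℕ) :
    ExtVanish R M N (j+1) ↔ ∀ f : P.complex.X (j+1) ⟶ N, P.complex.d (j+2) (j+1) ≫ f = 0 →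
      ∃ g : P.complex.X j ⟶ N, P.complex.d (j+1) j ≫ g = f := by
  unfold ExtVanish extGroup
  rw [← ModuleCat.isZero_iff_subsingleton, (P.isoExt (R := R) (j+1) N).isZero_iff,
    ← HomologicalComplex.exactAt_iff_isZero_homology,
    HomologicalComplex.exactAt_iff' _ j (j+1) (j+2) (by simp) (by simp),
    ShortComplex.moduleCat_exact_iff]
  rfl

theorem extVanish_adj (R S : Type u) [CommRing R] [CommRing S]
    (F : ModuleCat.{u} R ⥤ ModuleCat.{u} S) (H : ModuleCat.{u} S ⥤ ModuleCat.{u} R)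
    (adj : F ⊣ H) [F.Additive] [F.PreservesHomology] [F.PreservesProjectiveObjects]
    (M : ModuleCat.{u} R) (N : ModuleCat.{u} S) (j : ℕ) (h : ExtVanish R M (H.obj N) (j+1)) :
    ExtVanish S (F.obj M) N (j+1) := by
  let P : ProjectiveResolution M := ProjectiveResolution.of M
  rw [extVanish_iff_s12 R M _ P] at h
  rw [extVanish_iff_s12 S _ _ (mapRes F P)]
  intro f hf
  change F.obj (P.complex.X (j+1)) ⟶ N at f
  change F.map (P.complex.d (j+2) (j+1)) ≫ f = 0 at hf
  obtain ⟨g, hg⟩ := h (adj.homEquiv _ _ f) (by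
    rw [← adj.homEquiv_naturality_left, hf]
    have : H.Additive := adj.right_adjoint_additive
    simp [Adjunction.homEquiv_unit])
  refine ⟨(adj.homEquiv _ _).symm g, ?_⟩
  change F.map (P.complex.d (j+1) j) ≫ _ = f
  rw [← adj.homEquiv_naturality_left_symm, hg, Equiv.symm_apply_apply]

theorem projDimLE_adj (R S : Type u) [CommRing R] [CommRing S]
    (F : ModuleCat.{u} R ⥤ ModuleCat.{u} S) (H : ModuleCat.{u} S ⥤ ModuleCat.{u} R)
    (adj : F ⊣ H) [F.Additive] [F.PreservesHomology] [F.PreservesProjectiveObjects]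
    (M : ModuleCat.{u} R) (n : ℕ) (h : ProjDimLE R M n) :
    ProjDimLE S (F.obj M) n := by
  intro N j hj
  obtain ⟨j, rfl⟩ : ∃ k, j = k + 1 := ⟨j - 1, by omega⟩
  exact extVanish_adj R S F H adj M N j (h _ _ hj)

theorem projDimLE_retract (R : Type u) [CommRing R] {M M' : ModuleCat.{u} R}
    (i : M ⟶ M') (r : M' ⟶ M) (hir : i ≫ r = 𝟙 M) (n : ℕ) (h : ProjDimLE R M' n) :
    ProjDimLE R M n := by
  intro N j hj
  have h1 := h N j hj
  unfold ExtVanish extGroup at h1 ⊢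
  rw [← ModuleCat.isZero_iff_subsingleton] at h1 ⊢
  have h2 : ((Ext R (ModuleCat.{u} R) j).map r.op).app N ≫
      ((Ext R (ModuleCat.{u} R) j).map i.op).app N = 𝟙 _ := by
    rw [← NatTrans.comp_app, ← Functor.map_comp, ← op_comp, hir]
    simp
  rw [Limits.IsZero.iff_id_eq_zero, ← h2, h1.eq_of_tgt (((Ext R (ModuleCat.{u} R) j).map r.op).app N) 0]
  simp

open scoped TensorProduct

section unb
variable {R S : Type u} [CommRing R] [CommRing S] [Algebra R S]
  {V : Type u} [AddCommGroup V] [Module R V] [Module S V] [IsScalarTower R S V]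

theorem injective_restrict [Module.Flat R S] (h : Module.Injective S V) :
    Module.Injective R V := by
  refine ⟨fun X Y _ _ _ _ f hf g => ?_⟩
  obtain ⟨k, hk⟩ := h.out (f.baseChange S)
    (Module.Flat.lTensor_preserves_injective_linearMap (M := S) f hf) (g.liftBaseChange S)
  refine ⟨k.restrictScalars R ∘ₗ (TensorProduct.mk R S Y 1), fun x => ?_⟩
  simpa using hk (1 ⊗ₜ x)

theorem liftBC_comp {X Y : Type u} [AddCommGroup X] [Module R X] [AddCommGroup Y] [Module R Y]
    (f : X →ₗ[R] Y) (g : Y →ₗ[R] V) :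
    (g ∘ₗ f).liftBaseChange S = g.liftBaseChange S ∘ₗ f.baseChange S := by
  apply TensorProduct.AlgebraTensorModule.curry_injective
  ext x
  simp

theorem projective_restrict [Module.Free R S] [h : Module.Projective S V] :
    Module.Projective R V := by
  obtain ⟨s, hs⟩ := h.out
  have : Module.Projective R (V →₀ S) := inferInstance
  exact Module.Projective.of_split (s.restrictScalars R)
    ((Finsupp.linearCombination S id).restrictScalars R) (LinearMap.ext hs)

end unb

theorem averaging {R G V : Type u} [CommRing R] [CommGroup G] [Fintype G]
    (hord : IsUnit ((Fintype.card G : R))) [AddCommGroup V] [Module R V]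
    [Module (MonoidAlgebra R G) V] [IsScalarTower R (MonoidAlgebra R G) V] :
    ∃ i : V →ₗ[MonoidAlgebra R G] (MonoidAlgebra R G ⊗[R] V),
      (LinearMap.liftBaseChange (MonoidAlgebra R G) (LinearMap.id : V →ₗ[R] V)) ∘ₗ i =
        LinearMap.id := by
  let s : V →ₗ[R] (MonoidAlgebra R G ⊗[R] V) := TensorProduct.mk R _ V 1
  obtain ⟨c, hc⟩ := hord.exists_right_inv
  refine ⟨algebraMap R (MonoidAlgebra R G) c • s.sumOfConjugatesEquivariant G, ?_⟩
  ext v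
  have : ∀ g : G, (MonoidAlgebra.single g⁻¹ (1 : R)) • (LinearMap.liftBaseChange (MonoidAlgebra R G) 
      (LinearMap.id : V →ₗ[R] V)) (s (MonoidAlgebra.single g (1 : R) • v)) = v := by
    intro g
    simp only [s, TensorProduct.mk_apply, LinearMap.liftBaseChange_tmul, one_smul, LinearMap.id_apply]
    rw [← mul_smul, MonoidAlgebra.single_mul_single]
    simp [← MonoidAlgebra.one_def]
  rw [LinearMap.comp_apply, LinearMap.smul_apply, LinearMap.sumOfConjugatesEquivariant_apply,
    LinearMap.map_smul, map_sum, algebraMap_smul]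
  simp only [LinearMap.conjugate_apply, LinearMap.map_smul, this, LinearMap.id_apply]
  rw [Finset.sum_const, Finset.card_univ, ← Nat.cast_smul_eq_nsmul R, ← mul_smul, mul_comm, hc, one_smul]

section fun_
variable (R S : Type u) [CommRing R] [CommRing S] [Algebra R S]

abbrev res : ModuleCat.{u} S ⥤ ModuleCat.{u} R := ModuleCat.restrictScalars (algebraMap R S)

instance (N : ModuleCat.{u} S) : IsScalarTower R S ((res R S).obj N) where
  smul_assoc r s x := by
    rw [Algebra.smul_def, mul_smul]; rfl

def bc : ModuleCat.{u} R ⥤ ModuleCat.{u} S where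
  obj M := ModuleCat.of S (S ⊗[R] M)
  map f := ModuleCat.ofHom (f.hom.baseChange S)
  map_id M := by
    ext : 1; simp
  map_comp f g := by
    ext : 1; simp [LinearMap.baseChange_comp]

def bcAdj : bc R S ⊣ res R S := Adjunction.mkOfHomEquiv
  { homEquiv M N :=
      { toFun f := ModuleCat.ofHom (Y := (res R S).obj N) 
          ((LinearMap.liftBaseChangeEquiv (M := M) (N := (res R S).obj N) (R := R) S).symm f.hom)
        invFun f := ModuleCat.ofHom
          ((LinearMap.liftBaseChangeEquiv (M := M) (N := (res R S).obj N) (R := R) S) f.hom)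
        left_inv f := by
          ext : 1
          exact (LinearMap.liftBaseChangeEquiv (M := M) (N := (res R S).obj N) (R := R) S).apply_symm_apply f.hom
        right_inv f := by
          ext : 1
          exact (LinearMap.liftBaseChangeEquiv (M := M) (N := (res R S).obj N) (R := R) S).symm_apply_apply f.hom }
    homEquiv_naturality_left_symm f g := by
      ext : 1
      exact liftBC_comp _ _
    homEquiv_naturality_right f g := by
      ext x
      rfl }

instance : (bc R S).Additive where
  map_add {M N f g} := by
    ext : 1; exact LinearMap.baseChange_add f.hom g.hom

instance [Module.Flat R S] : (bc R S).PreservesHomology := by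
  apply Functor.preservesHomology_of_map_exact
  intro C hC
  rw [CategoryTheory.ShortComplex.ShortExact.moduleCat_exact_iff_function_exact] at hC ⊢
  exact Module.Flat.lTensor_exact S hC

instance : (bc R S).PreservesProjectiveObjects :=
  (bc R S).preservesProjectiveObjects_of_adjunction_of_preservesEpimorphisms (bcAdj R S)

instance : (res R S).PreservesHomology :=
  Functor.preservesHomology_of_map_exact _ (ModuleCat.restrictScalars_map_exact _)

instance [Module.Free R S] : (res R S).PreservesProjectiveObjects where
  projective_obj {M} hM := by
    have h1 : Module.Projective S M := (IsProjective.iff_projective M).2 hM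
    have h2 : Module.Projective S ((res R S).obj M) := h1
    have : Module.Projective R ((res R S).obj M) := projective_restrict (S := S)
    exact (IsProjective.iff_projective ((res R S).obj M)).1 this
end fun_

theorem stmt12 (R : Type u) [CommRing R] (G : Type u) [CommGroup G] [Fintype G]
    (hcoh : IsCoherentRing R)
    (hIF : ∀ (M : ModuleCat.{u} R), Module.Injective R M → Module.Flat R M)
    (hord : IsUnit ((Fintype.card G : R))) :
    IsCoherentRing (MonoidAlgebra R G) ∧
    (∀ (M : ModuleCat.{u} (MonoidAlgebra R G)),
      Module.Injective (MonoidAlgebra R G) M → Module.Flat (MonoidAlgebra R G) M) ∧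
    (∀ n : ℕ,
      (∀ (F : ModuleCat.{u} (MonoidAlgebra R G)), Module.Flat (MonoidAlgebra R G) F →
        ProjDimLE (MonoidAlgebra R G) F n) ↔
      (∀ (F : ModuleCat.{u} R), Module.Flat R F → ProjDimLE R F n)) := by
  have : Module.Finite R (MonoidAlgebra R G) := inferInstance
  have : Module.Free R (MonoidAlgebra R G) := inferInstance
  refine ⟨coherent_of_free R _ hcoh, fun M hM => ?_, fun n => ⟨fun h F hF => ?_, fun h F hF => ?_⟩⟩
  · have h1 : Module.Injective (MonoidAlgebra R G) ((res R (MonoidAlgebra R G)).obj M) := hM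
    have h2 : Module.Flat R ((res R (MonoidAlgebra R G)).obj M) :=
      hIF _ (injective_restrict (S := MonoidAlgebra R G) h1)
    obtain ⟨i, hi⟩ := averaging (V := (res R (MonoidAlgebra R G)).obj M) hord
    exact Module.Flat.of_retract i _ hi
  · have h1 : Module.Flat (MonoidAlgebra R G) ((bc R (MonoidAlgebra R G)).obj F) :=
      inferInstanceAs (Module.Flat (MonoidAlgebra R G) (MonoidAlgebra R G ⊗[R] F))
    have h2 := projDimLE_adj _ _ (res R (MonoidAlgebra R G)) _
      (ModuleCat.restrictCoextendScalarsAdj _) _ n (h _ h1)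
    let e : MonoidAlgebra R G →ₗ[R] R := (MonoidAlgebra.lift R R G 1).toLinearMap
    let r : MonoidAlgebra R G ⊗[R] F →ₗ[R] F := (TensorProduct.lid R F).toLinearMap ∘ₗ e.rTensor F
    let r' : (res R (MonoidAlgebra R G)).obj ((bc R (MonoidAlgebra R G)).obj F) ⟶ F :=
      ModuleCat.ofHom (X := (res R (MonoidAlgebra R G)).obj ((bc R (MonoidAlgebra R G)).obj F))
        { toFun := fun x => r x
          map_add' := fun x y => r.map_add x y
          map_smul' := fun c x => by
            refine Eq.trans ?_ (r.map_smul c x)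
            congr 1
            exact algebraMap_smul (MonoidAlgebra R G) c (show MonoidAlgebra R G ⊗[R] F from x) }
    refine projDimLE_retract R ((bcAdj R (MonoidAlgebra R G)).unit.app F) r' ?_ n h2
    ext x
    change r (1 ⊗ₜ x) = x
    simp [r, e]
  · have h1 : Module.Flat (MonoidAlgebra R G) ((res R (MonoidAlgebra R G)).obj F) := hF
    have h2 : Module.Flat R ((res R (MonoidAlgebra R G)).obj F) :=
      Module.Flat.trans R (MonoidAlgebra R G) _
    have h3 := projDimLE_adj _ _ (bc R (MonoidAlgebra R G)) _ (bcAdj R _) _ n (h _ h2)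
    obtain ⟨i, hi⟩ := averaging (V := (res R (MonoidAlgebra R G)).obj F) hord
    let p := LinearMap.liftBaseChange (MonoidAlgebra R G)
      (LinearMap.id : (res R (MonoidAlgebra R G)).obj F →ₗ[R] (res R (MonoidAlgebra R G)).obj F)
    exact projDimLE_retract (MonoidAlgebra R G)
      (M := F) (M' := (bc R (MonoidAlgebra R G)).obj ((res R (MonoidAlgebra R G)).obj F))
      (ModuleCat.ofHom i) (ModuleCat.ofHom p) (ModuleCat.hom_ext hi) n h3

end
end
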